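/- arXiv:1501.00872 — 6 statements merged into one kernel-verified Lean document; each statement's English description precedes it below -/
import Mathlib

section
/- For all natural numbers k and j with 1 ≤ j and 2j < k, the real number (4·cos²(jπ/k))⁻¹ is a root of the Fibonacci polynomial F_k, i.e., evaluating F_k at (4·cos²(jπ/k))⁻¹ gives 0. -/
open Polynomial Real

/-- The Fibonacci polynomials: `F 0 = 0`, `F 1 = 1`, `F (k+2) = F (k+1) - X * F k`. -/
noncomputable def fibPoly : ℕ → Polynomial ℤ
  | 0 => 0
  | 1 => 1
  | (k + 2) => fibPoly (k + 1) - Polynomial.X * fibPoly k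

/-!
After the substitution `x = y⁻²` the recurrence of the Fibonacci polynomials becomes that of the
rescaled Chebyshev polynomials of the second kind: `y ^ (k - 1) * F_k(y⁻²) = S_{k-1}(y)`. At
`y = 2 cos θ ≠ 0` the right-hand side is `sin (k θ) / sin θ`, which vanishes at `θ = j π / k` as
long as `sin θ ≠ 0`. Both `cos θ` and `sin θ` are nonzero exactly when `sin (2 θ)` is, that is, when
`k` does not divide `2 j`.
-/

theorem aeval_fibPoly_add_two {A : Type*} [CommRing A] (x : A) (k : ℕ) :
    aeval x (fibPoly (k + 2)) = aeval x (fibPoly (k + 1)) - x * aeval x (fibPoly k) := by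
  rw [fibPoly, map_sub, map_mul, aeval_X]

theorem pow_mul_aeval_fibPoly_eq_mul_eval_S {A : Type*} [CommRing A] {x y : A}
    (hxy : x * y ^ 2 = 1) (k : ℕ) :
    y ^ k * aeval x (fibPoly k) = y * (Chebyshev.S A (k - 1)).eval y := by
  induction k using Nat.twoStepInduction with
  | zero => simp [fibPoly]
  | one => simp [fibPoly]
  | more k ih ih' =>
    have eval_S_rec : (Chebyshev.S A ((k + 2 : ℕ) - 1)).eval y =
        y * (Chebyshev.S A ((k + 1 : ℕ) - 1)).eval y - (Chebyshev.S A (k - 1)).eval y := by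
      rw [show ((k + 2 : ℕ) : ℤ) - 1 = k - 1 + 2 by lia,
        show ((k + 1 : ℕ) : ℤ) - 1 = k - 1 + 1 by lia, Chebyshev.S_add_two,
        eval_sub, eval_mul, eval_X]
    rw [aeval_fibPoly_add_two, eval_S_rec]
    linear_combination y * ih' - ih - y ^ k * aeval x (fibPoly k) * hxy

theorem pow_mul_aeval_fibPoly_inv_four_mul_cos_sq_mul_sin {θ : ℝ} (hθ : cos θ ≠ 0) (k : ℕ) :
    (2 * cos θ) ^ k * aeval (4 * cos θ ^ 2)⁻¹ (fibPoly k) * sin θ =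
      2 * cos θ * sin (k * θ) := by
  have hxy : (4 * cos θ ^ 2)⁻¹ * (2 * cos θ) ^ 2 = 1 := by
    rw [mul_pow, show (2 : ℝ) ^ 2 = 4 by norm_num]
    exact inv_mul_cancel₀ (by positivity)
  calc (2 * cos θ) ^ k * aeval (4 * cos θ ^ 2)⁻¹ (fibPoly k) * sin θ
      = 2 * cos θ * ((Chebyshev.S ℝ (k - 1)).eval (2 * cos θ) * sin θ) := by
        rw [pow_mul_aeval_fibPoly_eq_mul_eval_S hxy, mul_assoc]
    _ = 2 * cos θ * sin (k * θ) := by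
        rw [Chebyshev.S_two_mul_real_cos]
        push_cast
        rw [sub_add_cancel]

theorem aeval_fibPoly_inv_four_mul_cos_sq_eq_zero {θ : ℝ} {k : ℕ} (hθ : sin (2 * θ) ≠ 0)
    (hkθ : sin (k * θ) = 0) : aeval (4 * cos θ ^ 2)⁻¹ (fibPoly k) = 0 := by
  obtain ⟨hsin, hcos⟩ : sin θ ≠ 0 ∧ cos θ ≠ 0 := by
    simpa only [sin_two_mul, mul_ne_zero_iff, ne_eq, OfNat.ofNat_ne_zero, not_false_eq_true,
      true_and] using hθ
  have h := pow_mul_aeval_fibPoly_inv_four_mul_cos_sq_mul_sin hcos k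
  rw [hkθ, mul_zero] at h
  have hpow : (2 * cos θ) ^ k ≠ 0 := pow_ne_zero k (mul_ne_zero two_ne_zero hcos)
  exact (mul_eq_zero_iff_left hpow).mp ((mul_eq_zero_iff_right hsin).mp h)

theorem sin_int_mul_pi_div_eq_zero_iff {n k : ℤ} (hk : k ≠ 0) :
    sin (n * π / k) = 0 ↔ k ∣ n := by
  have hk' : (k : ℝ) ≠ 0 := Int.cast_ne_zero.mpr hk
  rw [sin_eq_zero_iff, dvd_iff_exists_eq_mul_left]
  refine exists_congr fun m => ?_
  rw [eq_div_iff hk', mul_right_comm, mul_left_inj' pi_ne_zero, eq_comm]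
  norm_cast

theorem fibPoly_roots_general {k : ℕ} {j : ℤ} (hk : k ≠ 0) (hkj : ¬(k : ℤ) ∣ 2 * j) :
    aeval (4 * cos (j * π / k) ^ 2)⁻¹ (fibPoly k) = 0 := by
  apply aeval_fibPoly_inv_four_mul_cos_sq_eq_zero
  · have h := (sin_int_mul_pi_div_eq_zero_iff (Int.natCast_ne_zero.mpr hk)).not.mpr hkj
    push_cast at h
    rwa [← mul_div_assoc, ← mul_assoc]
  · rw [mul_div_cancel₀ _ (Nat.cast_ne_zero.mpr hk), sin_int_mul_pi]

theorem fibPoly_roots (k j : ℕ) (hj : 1 ≤ j) (hjk : 2 * j < k) :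
    Polynomial.aeval ((4 * Real.cos (j * Real.pi / k) ^ 2)⁻¹ : ℝ) (fibPoly k) = 0 := by
  have hkj : ¬k ∣ 2 * j := Nat.not_dvd_of_pos_of_lt (by lia) hjk
  exact_mod_cast fibPoly_roots_general (j := j) (by lia) (mod_cast hkj)
end

section
/- For every natural number k, the real number (4·cos²(π/(2k+3)))⁻¹ is the smallest positive real root of the Fibonacci polynomial F_{2k+3}: evaluating F_{2k+3} at (4·cos²(π/(2k+3)))⁻¹ gives 0, and for every real x with 0 < x < (4·cos²(π/(2k+3)))⁻¹ the evaluation of F_{2k+3} at x is nonzero. -/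
open Polynomial Real

/-!
With `4 c² x = 1`, the recurrence of the Fibonacci polynomials becomes that of the Chebyshev
polynomials of the second kind: `(2 c) ^ n * F_{n+1}(x) = U_n(c)`. Hence the positive roots of
`F_{n+1}` are the numbers `(4 c²)⁻¹` with `c` a positive root of `U_n`, and the smallest of them
comes from the largest root `cos (π / (n + 1))` of `U_n`.
-/

open Polynomial.Chebyshev (U)

theorem two_mul_pow_mul_aeval_fibPoly_succ {R : Type*} [CommRing R] {c x : R}
    (h : 4 * c ^ 2 * x = 1) (n : ℕ) :
    (2 * c) ^ n * aeval x (fibPoly (n + 1)) = (U R n).eval c := by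
  induction n using Nat.twoStepInduction with
  | zero => simp [fibPoly]
  | one => simp [fibPoly]
  | more n ih ih_succ =>
    have fibPoly_rec : aeval x (fibPoly (n + 3)) =
        aeval x (fibPoly (n + 2)) - x * aeval x (fibPoly (n + 1)) := by
      simp [fibPoly]
    have U_rec : (U R (n + 2 : ℕ)).eval c =
        2 * c * (U R (n + 1 : ℕ)).eval c - (U R n).eval c := by
      simp [Chebyshev.U_add_two]
    rw [fibPoly_rec, U_rec, ← ih, ← ih_succ]
    linear_combination -(2 * c) ^ n * aeval x (fibPoly (n + 1)) * h

theorem aeval_inv_fibPoly_succ_eq_zero_iff {K : Type*} [Field K] [NeZero (2 : K)] {c : K}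
    (hc : c ≠ 0) {n : ℕ} :
    aeval (4 * c ^ 2)⁻¹ (fibPoly (n + 1)) = 0 ↔ (U K n).eval c = 0 := by
  have two_mul_ne_zero : 2 * c ≠ 0 := mul_ne_zero two_ne_zero hc
  have h : 4 * c ^ 2 * (4 * c ^ 2)⁻¹ = 1 := by
    rw [show 4 * c ^ 2 = (2 * c) ^ 2 by ring]
    exact mul_inv_cancel₀ (pow_ne_zero 2 two_mul_ne_zero)
  rw [← two_mul_pow_mul_aeval_fibPoly_succ h,
    mul_eq_zero_iff_left (pow_ne_zero n two_mul_ne_zero)]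

theorem eval_U_real_eq_zero_iff {n : ℕ} {c : ℝ} :
    (U ℝ n).eval c = 0 ↔ ∃ k < n, cos ((k + 1) * π / (n + 1)) = c := by
  have U_ne_zero : U ℝ n ≠ 0 := Chebyshev.U_ne_zero ℝ n (by lia)
  rw [← IsRoot.def, ← mem_roots U_ne_zero, Chebyshev.roots_U_real]
  simp

theorem isGreatest_cos_pi_div_roots_U_real {n : ℕ} (hn : n ≠ 0) :
    IsGreatest {c : ℝ | (U ℝ n).eval c = 0} (cos (π / (n + 1))) := by
  refine ⟨eval_U_real_eq_zero_iff.mpr ⟨0, by lia, by simp⟩, fun c root ↦ ?_⟩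
  obtain ⟨k, hk, rfl⟩ := eval_U_real_eq_zero_iff.mp root
  have angle_le_pi : (k + 1) * π / (n + 1) ≤ π := by
    rw [div_le_iff₀' (by positivity)]
    gcongr
  have first_angle_le : π / (n + 1) ≤ (k + 1) * π / (n + 1) := by
    gcongr
    exact le_mul_of_one_le_left pi_pos.le (by simp)
  exact cos_le_cos_of_nonneg_of_le_pi (by positivity) angle_le_pi first_angle_le

theorem exists_pos_inv_four_mul_sq_eq {x : ℝ} (hx : 0 < x) :
    ∃ c : ℝ, 0 < c ∧ (4 * c ^ 2)⁻¹ = x := by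
  refine ⟨√(4 * x)⁻¹, by positivity, ?_⟩
  rw [sq_sqrt (by positivity)]
  field_simp

theorem fibPoly_smallest_positive_root_general {n : ℕ} (hn : 3 ≤ n) :
    IsLeast {x : ℝ | 0 < x ∧ aeval x (fibPoly n) = 0} (4 * cos (π / n) ^ 2)⁻¹ := by
  obtain ⟨m, rfl⟩ : ∃ m, n = m + 1 := ⟨n - 1, by lia⟩
  push_cast
  have cos_pos : 0 < cos (π / (m + 1)) := by
    refine cos_pos_of_mem_Ioo ⟨(neg_neg_of_pos pi_div_two_pos).trans (by positivity), ?_⟩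
    gcongr
    exact_mod_cast hn
  have greatest := isGreatest_cos_pi_div_roots_U_real (n := m) (by lia)
  refine ⟨⟨by positivity, ?_⟩, ?_⟩
  · exact (aeval_inv_fibPoly_succ_eq_zero_iff cos_pos.ne').mpr greatest.1
  · rintro x ⟨hx, root⟩
    obtain ⟨c, hc, rfl⟩ := exists_pos_inv_four_mul_sq_eq hx
    have c_le := greatest.2 ((aeval_inv_fibPoly_succ_eq_zero_iff hc.ne').mp root)
    gcongr

theorem fibPoly_smallest_positive_root (k : ℕ) :
    Polynomial.aeval ((4 * Real.cos (Real.pi / (2 * k + 3)) ^ 2)⁻¹ : ℝ)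
        (fibPoly (2 * k + 3)) = 0 ∧
      ∀ x : ℝ, 0 < x → x < (4 * Real.cos (Real.pi / (2 * k + 3)) ^ 2)⁻¹ →
        Polynomial.aeval x (fibPoly (2 * k + 3)) ≠ 0 := by
  have least := fibPoly_smallest_positive_root_general (n := 2 * k + 3) (by lia)
  push_cast at least
  exact ⟨least.1.2, fun x hx hlt root ↦ hlt.not_ge (least.2 ⟨hx, root⟩)⟩
end

section
/- Let T : ℕ → ℚ⟦X⟧ be the sequence of formal power series defined by T 0 = 0 and T (k+1) = X·(1 − T k)⁻¹ (for each k, the power series 1 − T k has constant coefficient 1 and hence is invertible). Then for every natural number k, one has F_{k+1}·(T k) = X·F_k in ℚ⟦X⟧, where the Fibonacci polynomials are regarded as formal power series. -/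
open PowerSeries

/-- The Fibonacci polynomials regarded as formal power series over `ℚ`. -/
noncomputable def fibPS (k : ℕ) : PowerSeries ℚ :=
  (((fibPoly k).map (Int.castRingHom ℚ) : Polynomial ℚ) : PowerSeries ℚ)

/-- The generating function of ordered trees of height at most `k`:
`T 0 = 0`, `T (k+1) = X * (1 - T k)⁻¹`. -/
noncomputable def treeGF : ℕ → PowerSeries ℚ
  | 0 => 0
  | (k + 1) => PowerSeries.X * (1 - treeGF k)⁻¹

theorem treeGF_eq_fib_ratio_general {R : Type*} [CommRing R] {x : R} {F T : ℕ → R}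
    (F_zero : F 0 = 0) (F_add_two : ∀ k, F (k + 2) = F (k + 1) - x * F k)
    (T_zero : T 0 = 0) (T_succ : ∀ k, (1 - T k) * T (k + 1) = x) (k : ℕ) :
    F (k + 1) * T k = x * F k := by
  induction k with
  | zero => rw [T_zero, F_zero, mul_zero, mul_zero]
  | succ k ih =>
    have F_ratio : F (k + 2) = F (k + 1) * (1 - T k) := by
      rw [F_add_two, mul_one_sub, ih]
    calc F (k + 2) * T (k + 1) = F (k + 1) * ((1 - T k) * T (k + 1)) := by
          rw [F_ratio, mul_assoc]
      _ = x * F (k + 1) := by rw [T_succ, mul_comm]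

theorem fibPS_zero : fibPS 0 = 0 := by
  simp [fibPS, fibPoly]

theorem fibPS_add_two (k : ℕ) : fibPS (k + 2) = fibPS (k + 1) - X * fibPS k := by
  simp [fibPS, fibPoly]

theorem constantCoeff_treeGF (k : ℕ) : constantCoeff (treeGF k) = 0 := by
  cases k <;> simp [treeGF]

theorem one_sub_treeGF_mul_treeGF_succ (k : ℕ) : (1 - treeGF k) * treeGF (k + 1) = X := by
  have constantCoeff_ne_zero : constantCoeff (1 - treeGF k) ≠ 0 := by
    simp [constantCoeff_treeGF]
  rw [treeGF, mul_left_comm, PowerSeries.mul_inv_cancel _ constantCoeff_ne_zero, mul_one]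

theorem treeGF_eq_fib_ratio (k : ℕ) :
    fibPS (k + 1) * treeGF k = PowerSeries.X * fibPS k :=
  treeGF_eq_fib_ratio_general fibPS_zero fibPS_add_two rfl
    one_sub_treeGF_mul_treeGF_succ k
end

section
/- Let T : ℕ → ℚ⟦X⟧ be the sequence of formal power series defined by T 0 = 0 and T (k+1) = X·(1 − T k)⁻¹. Then for every natural number k, one has (1 − 2·T k)·F_{k+1} = F_{k+2} − X·F_k in ℚ⟦X⟧, where the Fibonacci polynomials are regarded as formal power series. -/
/-! The quotients `X * F k / F (k + 1)` are the convergents of the continued fraction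
`X / (1 - X / (1 - ⋯))`, and so is `T k`. Without division, this is `T k * F (k + 1) = X * F k`,
equivalently `(1 - T k) * F (k + 1) = F (k + 2)`; subtracting the first identity from the second
gives the theorem. -/

open PowerSeries

section CommRing

variable {R : Type*} [CommRing R]

/-- The value `F k (x)` of the `k`-th Fibonacci polynomial at an element of a commutative ring.
Using `eval₂` along `Int.castRingHom R` rather than `aeval` keeps the two `ℤ`-algebra instances on
`ℚ⟦X⟧` (as a ring and as power series over a `ℤ`-algebra) out of the statements. -/
noncomputable def fibEval (x : R) (k : ℕ) : R :=
  (fibPoly k).eval₂ (Int.castRingHom R) x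

@[simp]
theorem fibEval_zero (x : R) : fibEval x 0 = 0 := by
  simp [fibEval, fibPoly]

theorem fibEval_add_two (x : R) (k : ℕ) :
    fibEval x (k + 2) = fibEval x (k + 1) - x * fibEval x k := by
  simp [fibEval, fibPoly]

variable {x : R} {t : ℕ → R}

theorem mul_fibEval_succ (h_zero : t 0 = 0) (h_succ : ∀ k, t (k + 1) * (1 - t k) = x) (k : ℕ) :
    t k * fibEval x (k + 1) = x * fibEval x k := by
  induction k with
  | zero => simp [h_zero]
  | succ k ih =>
    calc
      t (k + 1) * fibEval x (k + 2)
        = t (k + 1) * (fibEval x (k + 1) - t k * fibEval x (k + 1)) := by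
            rw [fibEval_add_two, ih]
      _ = t (k + 1) * (1 - t k) * fibEval x (k + 1) := by ring
      _ = x * fibEval x (k + 1) := by rw [h_succ]

theorem one_sub_mul_fibEval_succ (h_zero : t 0 = 0) (h_succ : ∀ k, t (k + 1) * (1 - t k) = x)
    (k : ℕ) : (1 - t k) * fibEval x (k + 1) = fibEval x (k + 2) := by
  rw [sub_mul, one_mul, mul_fibEval_succ h_zero h_succ, fibEval_add_two]

theorem one_sub_two_treeGF_mul_fib_general (h_zero : t 0 = 0)
    (h_succ : ∀ k, t (k + 1) * (1 - t k) = x) (k : ℕ) :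
    (1 - 2 * t k) * fibEval x (k + 1) = fibEval x (k + 2) - x * fibEval x k := by
  rw [← one_sub_mul_fibEval_succ h_zero h_succ, ← mul_fibEval_succ h_zero h_succ]
  ring

end CommRing

theorem fibPS_eq_fibEval (k : ℕ) : fibPS k = fibEval X k := by
  have h_cast : (C (R := ℚ)).comp (Int.castRingHom ℚ) = Int.castRingHom ℚ⟦X⟧ :=
    RingHom.eq_intCast' _
  rw [fibPS, ← Polynomial.eval₂_C_X_eq_coe, Polynomial.eval₂_map, h_cast, fibEval]

theorem treeGF_succ_mul_one_sub_treeGF (k : ℕ) : treeGF (k + 1) * (1 - treeGF k) = X := by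
  have h_unit : constantCoeff (1 - treeGF k) ≠ 0 := by simp [constantCoeff_treeGF]
  rw [treeGF, mul_assoc, PowerSeries.inv_mul_cancel _ h_unit, mul_one]

theorem one_sub_two_treeGF_mul_fib (k : ℕ) :
    (1 - 2 * treeGF k) * fibPS (k + 1) = fibPS (k + 2) - PowerSeries.X * fibPS k := by
  simpa only [fibPS_eq_fibEval] using
    one_sub_two_treeGF_mul_fib_general rfl treeGF_succ_mul_one_sub_treeGF k
end

section
/- Let T : ℕ → ℚ⟦X⟧ be the sequence of formal power series defined by T 0 = 0 and T (k+1) = X·(1 − T k)⁻¹. Then for every natural number k, one has (1 − T k − T (k+1))·F_{k+1}·F_{k+2} = F_{2k+3} in ℚ⟦X⟧, where the Fibonacci polynomials are regarded as formal power series. -/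
open PowerSeries

/-!
The tree series enter only through `T 0 = 0` and `T (k + 1) * (1 - T k) = x`, where `x = X`, so one
may work in any commutative ring. Write `F k` for the value of `fibPoly k` at `x`. By
induction, `T k * F (k + 1) = x * F k`, that is, `(1 - T k) * F (k + 1) = F (k + 2)`. Multiplying
`1 - T k - T (k + 1)` by `F (k + 1) * F (k + 2)` therefore leaves
`F (k + 2) ^ 2 - x * F (k + 1) ^ 2`, and the addition formula for the Fibonacci polynomials
evaluates this as `F (2 * k + 3)`.
-/

theorem fibPoly_add_two (n : ℕ) :
    fibPoly (n + 2) = fibPoly (n + 1) - Polynomial.X * fibPoly n := by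
  rw [fibPoly]

theorem fibPoly_add (m n : ℕ) :
    fibPoly (m + n + 1) =
      fibPoly (m + 1) * fibPoly (n + 1) - Polynomial.X * fibPoly m * fibPoly n := by
  induction n generalizing m with
  | zero => simp [fibPoly]
  | succ n ih =>
    calc
      fibPoly (m + (n + 1) + 1) = fibPoly (m + 1 + n + 1) := by congr 1; ring
      _ = fibPoly (m + 2) * fibPoly (n + 1) - Polynomial.X * fibPoly (m + 1) * fibPoly n :=
        ih (m + 1)
      _ = fibPoly (m + 1) * fibPoly (n + 2) - Polynomial.X * fibPoly m * fibPoly (n + 1) := by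
        rw [fibPoly_add_two m, fibPoly_add_two n]
        ring

theorem fibPoly_two_mul_add_one (n : ℕ) :
    fibPoly (2 * n + 1) = fibPoly (n + 1) ^ 2 - Polynomial.X * fibPoly n ^ 2 := by
  rw [two_mul, fibPoly_add]
  ring

section CommRing

variable {R : Type*} [CommRing R]

/-- The value of the `k`-th Fibonacci polynomial at an element `x` of a commutative ring. Using
`eval₂` rather than `aeval` avoids a choice between the two `ℤ`-algebra structures that instance
search provides on `ℚ⟦X⟧`. -/
noncomputable def evalFibPoly (x : R) (k : ℕ) : R :=
  (fibPoly k).eval₂ (Int.castRingHom R) x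

theorem evalFibPoly_zero (x : R) : evalFibPoly x 0 = 0 := by simp [evalFibPoly, fibPoly]

theorem evalFibPoly_add_two (x : R) (n : ℕ) :
    evalFibPoly x (n + 2) = evalFibPoly x (n + 1) - x * evalFibPoly x n := by
  simp [evalFibPoly, fibPoly_add_two]

theorem evalFibPoly_two_mul_add_one (x : R) (n : ℕ) :
    evalFibPoly x (2 * n + 1) = evalFibPoly x (n + 1) ^ 2 - x * evalFibPoly x n ^ 2 := by
  simp [evalFibPoly, fibPoly_two_mul_add_one, Polynomial.eval₂_pow]

variable {x : R} {T : ℕ → R}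

theorem mul_evalFibPoly_succ (hT₀ : T 0 = 0) (hT : ∀ k, T (k + 1) * (1 - T k) = x) (k : ℕ) :
    T k * evalFibPoly x (k + 1) = x * evalFibPoly x k := by
  induction k with
  | zero => rw [hT₀, evalFibPoly_zero, zero_mul, mul_zero]
  | succ k ih =>
    calc
      T (k + 1) * evalFibPoly x (k + 2)
        = T (k + 1) * (evalFibPoly x (k + 1) - T k * evalFibPoly x (k + 1)) := by
          rw [evalFibPoly_add_two, ih]
      _ = T (k + 1) * (1 - T k) * evalFibPoly x (k + 1) := by ring
      _ = x * evalFibPoly x (k + 1) := by rw [hT]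

theorem one_sub_mul_evalFibPoly_succ (hT₀ : T 0 = 0) (hT : ∀ k, T (k + 1) * (1 - T k) = x)
    (k : ℕ) : (1 - T k) * evalFibPoly x (k + 1) = evalFibPoly x (k + 2) := by
  rw [sub_mul, one_mul, mul_evalFibPoly_succ hT₀ hT, evalFibPoly_add_two]

theorem one_sub_treeGF_sub_treeGF_mul_fib_general (hT₀ : T 0 = 0)
    (hT : ∀ k, T (k + 1) * (1 - T k) = x) (k : ℕ) :
    (1 - T k - T (k + 1)) * evalFibPoly x (k + 1) * evalFibPoly x (k + 2) =
      evalFibPoly x (2 * k + 3) := by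
  calc
    (1 - T k - T (k + 1)) * evalFibPoly x (k + 1) * evalFibPoly x (k + 2)
      = (1 - T k) * evalFibPoly x (k + 1) * evalFibPoly x (k + 2) -
          T (k + 1) * evalFibPoly x (k + 2) * evalFibPoly x (k + 1) := by ring
    _ = evalFibPoly x (k + 2) ^ 2 - x * evalFibPoly x (k + 1) ^ 2 := by
      rw [one_sub_mul_evalFibPoly_succ hT₀ hT, mul_evalFibPoly_succ hT₀ hT]
      ring
    _ = evalFibPoly x (2 * k + 3) := (evalFibPoly_two_mul_add_one x (k + 1)).symm

end CommRing

theorem fibPS_eq_evalFibPoly_X (k : ℕ) : fibPS k = evalFibPoly X k := by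
  rw [fibPS, evalFibPoly, ← Polynomial.eval₂_C_X_eq_coe, Polynomial.eval₂_map,
    RingHom.ext_int (C.comp (Int.castRingHom ℚ)) (Int.castRingHom ℚ⟦X⟧)]

theorem one_sub_treeGF_sub_treeGF_mul_fib (k : ℕ) :
    (1 - treeGF k - treeGF (k + 1)) * fibPS (k + 1) * fibPS (k + 2) =
      fibPS (2 * k + 3) := by
  simpa only [fibPS_eq_evalFibPoly_X] using
    one_sub_treeGF_sub_treeGF_mul_fib_general rfl treeGF_succ_mul_one_sub_treeGF k
end

section
/- Let C := ∑_{n≥0} catalan(n)·X^n and B := ∑_{n≥0} (binomial(2n, n))·X^n in the formal power series ring ℤ⟦X⟧. Then B·(1 − 2·X·C) = 1. -/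
open PowerSeries

/-- The Catalan generating function `∑ catalan n • Xⁿ` over `ℤ`. -/
noncomputable def catalanGF : PowerSeries ℤ :=
  PowerSeries.mk fun n => (catalan n : ℤ)

/-- The central binomial generating function `∑ (2n choose n) • Xⁿ` over `ℤ`. -/
noncomputable def centralBinomGF : PowerSeries ℤ :=
  PowerSeries.mk fun n => ((2 * n).choose n : ℤ)

/-!
The functional equation `C = 1 + X * C ^ 2` says that `F = X * C` satisfies `F = X + F ^ 2`, and
`(n + 1) * catalan n = (2 * n).choose n` says that `F' = B`. Differentiating the quadratic equation
gives `F' = 1 + 2 * F * F'`, that is, `B * (1 - 2 * X * C) = 1`.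
-/

theorem derivation_mul_one_sub_two_mul {R A : Type*} [CommSemiring R] [CommRing A] [Algebra R A]
    (D : Derivation R A A) {a b : A} (h : a = b + a ^ 2) : D a * (1 - 2 * a) = D b := by
  have hD : D a = D b + 2 * a * D a := by
    conv_lhs => rw [h]
    simp only [map_add, D.leibniz_pow, Nat.add_one_sub_one, pow_one, smul_eq_mul, nsmul_eq_mul,
      Nat.cast_ofNat, mul_assoc]
  linear_combination hD

section CommSemiring

variable (R : Type*) [CommSemiring R]

theorem map_catalanSeries :
    catalanSeries.map (Nat.castRingHom R) = mk fun n ↦ (catalan n : R) := by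
  ext n
  simp only [coeff_map, catalanSeries_coeff, coeff_mk, Nat.coe_castRingHom]

theorem X_mul_mk_catalan_eq_X_add_sq :
    (X * mk fun n ↦ (catalan n : R)) = X + (X * mk fun n ↦ (catalan n : R)) ^ 2 := by
  have hC : (mk fun n ↦ (catalan n : R)) ^ 2 * X + 1 = mk fun n ↦ (catalan n : R) := by
    simpa only [map_add, map_mul, map_pow, map_X, map_one, map_catalanSeries] using
      congrArg (PowerSeries.map (Nat.castRingHom R)) catalanSeries_sq_mul_X_add_one
  conv_lhs => rw [← hC]
  ring

theorem derivative_X_mul_mk_catalan :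
    derivative R (X * mk fun n ↦ (catalan n : R)) = mk fun n ↦ ((2 * n).choose n : R) := by
  ext n
  have hn : (catalan n : R) * (n + 1) = (2 * n).choose n := by
    rw [← Nat.centralBinom_eq_two_mul_choose, ← succ_mul_catalan_eq_centralBinom, mul_comm]
    push_cast
    rfl
  simpa only [coeff_derivative, coeff_succ_X_mul, coeff_mk] using hn

end CommSemiring

theorem centralBinomGF_mul_catalanGF_general (R : Type*) [CommRing R] :
    (mk fun n ↦ ((2 * n).choose n : R)) * (1 - 2 * X * mk fun n ↦ (catalan n : R)) = 1 := by
  rw [← derivative_X_mul_mk_catalan, mul_assoc 2,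
    derivation_mul_one_sub_two_mul (derivative R) (X_mul_mk_catalan_eq_X_add_sq R), derivative_X]

theorem centralBinomGF_mul_catalanGF :
    centralBinomGF * (1 - 2 * PowerSeries.X * catalanGF) = 1 :=
  centralBinomGF_mul_catalanGF_general ℤ
end
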